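/- Let a countable amenable group G act by homeomorphisms on a zero-dimensional compact metric space X and let A, B ⊆ X be disjoint clopen sets. For any Følner sequence (F_n), the sequences inf_{x∈X} D_{F_n}(B_x), sup_{x∈X} D̄_{F_n}(B_x) and inf_{x∈X} D_{F_n}(B_x,A_x) converge (so the limsup and liminf in the definitions of the uniform densities are in fact limits), the limits are independent of the choice of the Følner sequence, and D(B) = sup_F inf_{x∈X} D_F(B_x), D̄(B) = inf_F sup_{x∈X} D̄_F(B_x), D(B,A) = sup_F inf_{x∈X} D_F(B_x,A_x), where F ranges over all finite subsets of G. -/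

import Mathlib

/-!
STATEMENT 6 (Lemma `bbb` of the paper):
For an action of a countable amenable group `G` on a zero-dimensional compact metric
space `X` and disjoint clopen `A, B ⊆ X`, the sequences `inf_x D_{F_n}(B_x)`,
`sup_x D̄_{F_n}(B_x)` and `inf_x D_{F_n}(B_x, A_x)` converge along any Følner sequence,
the limits are independent of the Følner sequence, and equal
`sup_F inf_x D_F(B_x)`, `inf_F sup_x D̄_F(B_x)`, `sup_F inf_x D_F(B_x,A_x)` respectively.
Here `B_x = {g : g(x) ∈ B}`.
-/

open Filter Topology Pointwise

noncomputable def cnt {G : Type*} [Group G] (F : Finset G) (B : Set G) (g : G) : ℝ :=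
  ((B ∩ ((F : Set G) * {g})).ncard : ℝ) / F.card

noncomputable def lowD {G : Type*} [Group G] (F : Finset G) (B : Set G) : ℝ :=
  ⨅ g : G, cnt F B g

noncomputable def uppD {G : Type*} [Group G] (F : Finset G) (B : Set G) : ℝ :=
  ⨆ g : G, cnt F B g

noncomputable def advD {G : Type*} [Group G] (F : Finset G) (B A : Set G) : ℝ :=
  ⨅ g : G, (cnt F B g - cnt F A g)

def IsFolner {G : Type*} [Group G] (F : ℕ → Finset G) : Prop :=
  (∀ n, (F n).Nonempty) ∧
  ∀ g : G, Tendsto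
    (fun n => (((({g} : Set G) * (F n : Set G)) ∩ (F n : Set G)).ncard : ℝ) / (F n).card)
    atTop (𝓝 1)

/-- `A_x = {g ∈ G : g(x) ∈ A}`, the set of return times of the orbit of `x` to `A`. -/
def ret (G : Type*) [Group G] {X : Type*} [MulAction G X] (A : Set X) (x : X) : Set G :=
  {g : G | g • x ∈ A}

noncomputable def avgF {G : Type*} [Group G] {X : Type*} [MulAction G X] (F : Finset G)
    (f : X → ℝ) (x : X) : ℝ := (∑ h ∈ F, f (h • x)) / F.card

lemma avgF_abs {G : Type*} [Group G] {X : Type*} [MulAction G X] (F : Finset G)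
    (f : X → ℝ) (hf : ∀ x, |f x| ≤ 1) (x : X) : |avgF F f x| ≤ 1 := by
  unfold avgF
  rw [abs_div, Nat.abs_cast]
  refine div_le_one_of_le₀ ?_ (Nat.cast_nonneg _)
  refine (Finset.abs_sum_le_sum_abs _ _).trans ?_
  refine (Finset.sum_le_sum (fun h _ => hf (h • x))).trans ?_
  simp

lemma avgF_bdd {G : Type*} [Group G] {X : Type*} [MulAction G X] (F : Finset G)
    (f : X → ℝ) (hf : ∀ x, |f x| ≤ 1) : BddBelow (Set.range (avgF F f)) :=
  ⟨-1, by rintro _ ⟨x, rfl⟩; exact (abs_le.1 (avgF_abs F f hf x)).1⟩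

lemma iInf_avgF {G : Type*} [Group G] {X : Type*} [MulAction G X] [Nonempty X] (F : Finset G)
    (f : X → ℝ) (hf : ∀ x, |f x| ≤ 1) :
    (⨅ x : X, ⨅ g : G, avgF F f (g • x)) = ⨅ x : X, avgF F f x := by
  have hb := avgF_bdd F f hf
  have hb2 : ∀ x : X, BddBelow (Set.range fun g : G => avgF F f (g • x)) := fun x =>
    hb.mono (by rintro _ ⟨g, rfl⟩; exact ⟨_, rfl⟩)
  have hge : ∀ x : X, (⨅ x : X, avgF F f x) ≤ ⨅ g : G, avgF F f (g • x) := fun x =>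
    le_ciInf fun g => ciInf_le hb _
  apply le_antisymm
  · refine le_ciInf fun x => ?_
    refine (ciInf_le ⟨_, by rintro _ ⟨x, rfl⟩; exact hge x⟩ x).trans ?_
    refine (ciInf_le (hb2 x) 1).trans ?_
    simp
  · exact le_ciInf hge

lemma shift_bound {G : Type*} [Group G] {X : Type*} [MulAction G X] (F : Finset G) (hF : F.Nonempty)
    (f : X → ℝ) (hf : ∀ x, |f x| ≤ 1) (k : G) (x : X) :
    (∑ h ∈ F, f ((k * h) • x)) / F.card ≤ avgF F f x +
      2 * (1 - (((({k} : Set G) * (F : Set G)) ∩ (F : Set G)).ncard : ℝ) / F.card) := by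
  classical
  have hc : (0 : ℝ) < F.card := by exact_mod_cast hF.card_pos
  set K : Finset G := F.image (fun h => k * h) with hK
  have hKc : K.card = F.card := Finset.card_image_of_injective _ (mul_right_injective k)
  have e1 : ∑ h ∈ F, f ((k * h) • x) = ∑ h ∈ K, f (h • x) := by
    rw [hK, Finset.sum_image]
    intro a _ b _ h
    exact mul_right_injective k h
  have e2 : ((({k} : Set G) * (F : Set G)) ∩ (F : Set G)) = ((K ∩ F : Finset G) : Set G) := by
    rw [Finset.coe_inter, hK, Finset.coe_image, Set.singleton_mul]
  rw [e2, Set.ncard_coe_finset, e1, avgF]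
  have s1 := Finset.sum_inter_add_sum_sdiff K F (fun h => f (h • x))
  have s2 := Finset.sum_inter_add_sum_sdiff F K (fun h => f (h • x))
  have c1 := Finset.card_inter_add_card_sdiff K F
  have c2 := Finset.card_inter_add_card_sdiff F K
  rw [Finset.inter_comm F K] at s2 c2
  have b1 : ∑ h ∈ K \ F, f (h • x) ≤ ((K \ F).card : ℝ) :=
    (Finset.sum_le_sum (fun h _ => (abs_le.1 (hf (h • x))).2)).trans (by simp)
  have b2 : -((F \ K).card : ℝ) ≤ ∑ h ∈ F \ K, f (h • x) :=
    le_trans (by simp) (Finset.sum_le_sum (fun h _ => (abs_le.1 (hf (h • x))).1))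
  have c1' : ((K ∩ F).card : ℝ) + (K \ F).card = F.card := by
    rw [← hKc]; exact_mod_cast c1
  have c2' : ((K ∩ F).card : ℝ) + (F \ K).card = F.card := by exact_mod_cast c2
  have : (∑ h ∈ F, f (h • x)) / (F.card : ℝ) + 2 * (1 - ((K ∩ F).card : ℝ) / F.card)
      = (∑ h ∈ F, f (h • x) + 2 * (F.card - (K ∩ F).card)) / F.card := by
    field_simp
  rw [this]
  gcongr
  linarith

lemma main_lim {G : Type*} [Group G] {X : Type*} [MulAction G X] [Nonempty X]
    (f : X → ℝ) (hf : ∀ x, |f x| ≤ 1) (Fs : ℕ → Finset G) (hFs : IsFolner Fs) :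
    Tendsto (fun n => ⨅ x : X, avgF (Fs n) f x) atTop
      (𝓝 (⨆ F : {F : Finset G // F.Nonempty}, ⨅ x : X, avgF F.1 f x)) := by
  obtain ⟨hne, hlim⟩ := hFs
  have hbd : BddAbove (Set.range fun F : {F : Finset G // F.Nonempty} => ⨅ x : X, avgF F.1 f x) := by
    refine ⟨1, ?_⟩
    rintro _ ⟨F, rfl⟩
    obtain ⟨x⟩ := ‹Nonempty X›
    exact (ciInf_le (avgF_bdd F.1 f hf) x).trans (abs_le.1 (avgF_abs F.1 f hf x)).2
  haveI : Nonempty {F : Finset G // F.Nonempty} := ⟨⟨{1}, by simp⟩⟩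
  rw [tendsto_order]
  constructor
  · intro a ha
    obtain ⟨⟨F, hF⟩, hFa⟩ := exists_lt_of_lt_ciSup ha
    simp only at hFa
    have hc : (0 : ℝ) < F.card := by exact_mod_cast hF.card_pos
    set r : G → ℕ → ℝ := fun k n =>
      (((({k} : Set G) * (Fs n : Set G)) ∩ (Fs n : Set G)).ncard : ℝ) / (Fs n).card with hr
    have key : ∀ n, (⨅ x : X, avgF F f x) - (∑ k ∈ F, 2 * (1 - r k n)) / F.card
        ≤ ⨅ x : X, avgF (Fs n) f x := by
      intro n
      have hcn : (0 : ℝ) < (Fs n).card := by exact_mod_cast (hne n).card_pos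
      refine le_ciInf fun x => ?_
      have h1 : ∑ k ∈ F, (∑ h ∈ Fs n, f ((k * h) • x)) / (Fs n).card ≤
          ∑ k ∈ F, (avgF (Fs n) f x + 2 * (1 - r k n)) :=
        Finset.sum_le_sum fun k _ => shift_bound (Fs n) (hne n) f hf k x
      rw [Finset.sum_add_distrib, Finset.sum_const, nsmul_eq_mul, ← Finset.sum_div,
        Finset.sum_comm] at h1
      have h2 : ((Fs n).card : ℝ) * ((⨅ x : X, avgF F f x) * F.card) ≤
          ∑ h ∈ Fs n, ∑ k ∈ F, f ((k * h) • x) := by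
        rw [← nsmul_eq_mul, ← Finset.sum_const]
        refine Finset.sum_le_sum fun h _ => ?_
        have := ciInf_le (avgF_bdd F f hf) (h • x)
        conv_rhs at this => unfold avgF
        rw [le_div_iff₀ hc] at this
        simpa [mul_smul] using this
      have h3 : (⨅ x : X, avgF F f x) * F.card ≤
          F.card * avgF (Fs n) f x + ∑ k ∈ F, 2 * (1 - r k n) := by
        refine le_trans ?_ h1
        rw [le_div_iff₀ hcn]
        linarith
      rw [sub_le_iff_le_add, ← mul_le_mul_iff_left₀ hc, add_mul, div_mul_cancel₀ _ hc.ne']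
      linarith
    have hl : Tendsto (fun n => (⨅ x : X, avgF F f x) - (∑ k ∈ F, 2 * (1 - r k n)) / F.card) atTop
        (𝓝 ((⨅ x : X, avgF F f x) - (∑ k ∈ F, 2 * (1 - (1 : ℝ))) / F.card)) := by
      refine tendsto_const_nhds.sub (Tendsto.div_const (tendsto_finsetSum _ fun k _ => ?_) _)
      exact (tendsto_const_nhds.sub (hlim k)).const_mul 2
    simp only [sub_self, mul_zero, Finset.sum_const_zero, zero_div, sub_zero] at hl
    filter_upwards [hl.eventually (lt_mem_nhds hFa)] with n hn
    exact hn.trans_le (key n)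
  · intro a ha
    exact Eventually.of_forall fun n => (le_ciSup hbd ⟨Fs n, hne n⟩).trans_lt ha

lemma cnt_eq {G : Type*} [Group G] {X : Type*} [MulAction G X] (F : Finset G) (B : Set X)
    (x : X) (g : G) : cnt F (ret G B x) g = avgF F (B.indicator 1) (g • x) := by
  classical
  unfold cnt avgF
  congr 1
  have : ret G B x ∩ ((F : Set G) * {g}) =
      (((F.filter (fun h => h • g • x ∈ B)).image (fun h => h * g) : Finset G) : Set G) := by
    ext k
    simp only [ret, Set.mul_singleton, Set.mem_inter_iff, Set.mem_ofPred_eq, Set.mem_image,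
      Finset.coe_image, Finset.coe_filter, Finset.mem_coe]
    constructor
    · rintro ⟨h, a, ha, rfl⟩
      exact ⟨a, ⟨ha, by rwa [smul_smul]⟩, rfl⟩
    · rintro ⟨a, ⟨ha, h⟩, rfl⟩
      exact ⟨by rwa [smul_smul] at h, a, ha, rfl⟩
  rw [this, Set.ncard_coe_finset, Finset.card_image_of_injective _ (mul_left_injective g)]
  simp [Set.indicator_apply, Finset.sum_ite]

lemma iInf_neg_real {ι : Sort*} (f : ι → ℝ) : (⨅ i, -f i) = -⨆ i, f i := by
  rw [iInf, iSup, ← Real.sInf_neg]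
  congr 1
  ext y
  simp only [Set.mem_range, Set.mem_neg]
  exact exists_congr fun i => neg_eq_iff_eq_neg

theorem stmt6 (G : Type*) [Group G] [Countable G]
    (X : Type*) [TopologicalSpace X] [CompactSpace X] [TopologicalSpace.MetrizableSpace X]
    [TotallyDisconnectedSpace X] [Nonempty X]
    [MulAction G X] [ContinuousConstSMul G X]
    (A B : Set X) (hA : IsClopen A) (hB : IsClopen B) (hAB : Disjoint A B)
    (Fs : ℕ → Finset G) (hFs : IsFolner Fs) :
    Tendsto (fun n => ⨅ x : X, lowD (Fs n) (ret G B x)) atTop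
      (𝓝 (⨆ F : {F : Finset G // F.Nonempty}, ⨅ x : X, lowD F.1 (ret G B x))) ∧
    Tendsto (fun n => ⨆ x : X, uppD (Fs n) (ret G B x)) atTop
      (𝓝 (⨅ F : {F : Finset G // F.Nonempty}, ⨆ x : X, uppD F.1 (ret G B x))) ∧
    Tendsto (fun n => ⨅ x : X, advD (Fs n) (ret G B x) (ret G A x)) atTop
      (𝓝 (⨆ F : {F : Finset G // F.Nonempty},
        ⨅ x : X, advD F.1 (ret G B x) (ret G A x))) := by
  classical
  have hi : ∀ (C : Set X) x, 0 ≤ C.indicator (1 : X → ℝ) x ∧ C.indicator (1 : X → ℝ) x ≤ 1 := by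
    intro C x
    by_cases h : x ∈ C <;> simp [h]
  have f1 : ∀ x, |B.indicator (1 : X → ℝ) x| ≤ 1 := fun x =>
    abs_le.2 ⟨by linarith [hi B x], (hi B x).2⟩
  have f2 : ∀ x, |(-B.indicator (1 : X → ℝ)) x| ≤ 1 := fun x => by
    rw [Pi.neg_apply, abs_neg]; exact f1 x
  have f3 : ∀ x, |(B.indicator (1 : X → ℝ) - A.indicator (1 : X → ℝ)) x| ≤ 1 := fun x => by
    rw [Pi.sub_apply]
    have := hi A x
    have := hi B x
    exact abs_le.2 ⟨by linarith, by linarith⟩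
  have g1 : ∀ F : Finset G, (⨅ x : X, lowD F (ret G B x)) =
      ⨅ x : X, avgF F (B.indicator (1 : X → ℝ)) x := fun F => by
    rw [← iInf_avgF F _ f1]
    simp only [lowD, cnt_eq]
  have g2 : ∀ F : Finset G, (⨆ x : X, uppD F (ret G B x)) =
      -⨅ x : X, avgF F (-B.indicator (1 : X → ℝ)) x := fun F => by
    rw [← iInf_avgF F _ f2]
    have : ∀ y : X, avgF F (-B.indicator (1 : X → ℝ)) y = -avgF F (B.indicator (1 : X → ℝ)) y := by
      intro y
      simp [avgF, neg_div]
    simp only [uppD, cnt_eq, this, iInf_neg_real, neg_neg]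
  have g3 : ∀ F : Finset G, (⨅ x : X, advD F (ret G B x) (ret G A x)) =
      ⨅ x : X, avgF F (B.indicator (1 : X → ℝ) - A.indicator (1 : X → ℝ)) x := fun F => by
    rw [← iInf_avgF F _ f3]
    simp only [advD, cnt_eq]
    simp [avgF, sub_div]
  simp only [g1, g2, g3]
  refine ⟨main_lim _ f1 Fs hFs, ?_, main_lim _ f3 Fs hFs⟩
  have := (main_lim _ f2 Fs hFs).neg
  rw [iInf_neg_real]
  exact this
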